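/- Let D = (P,𝓑) be a symmetric 2-(v,k,λ) design and let G be a flag-transitive automorphism group of D, with block B ∈ 𝓑. (i) If the induced group G_B^B is isomorphic to a dihedral group D_{2n} (n ≥ 3) and λ = 1, then v = 7, k = 3, n = 3 (so G_B^B ≅ D_6 ≅ S_3), G is isomorphic to PSL_3(2), and G_B does not act faithfully on B (indeed G_B ≅ S_4). (ii) Consequently, if G_B itself is isomorphic to a dihedral group D_{2n} (n ≥ 3), then λ > 1. -/

import Mathlib

/-!
For `λ = 1` the design is a projective plane of order `q = k - 1`, and everything rests on two
features of a transitive permutation group that is a quotient of a dihedral group: a point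
stabilizer contains at most one nontrivial element, and a nontrivial element fixes at most two
points. By flag-transitivity both hold for the group induced on every line. As `|G|` is even, `G`
contains an involution; on every line it fixes at most two points or is trivial, which forces it to
fix some line pointwise, so it is a homology (`q` odd) or an elation (`q` even).

* If `q` is odd, every point is the center of an involutory homology. The bound on point stabilizers
  makes the map from centers to axes a polarity without absolute points, which is impossible by
  the trace argument of the friendship theorem (`false_of_polarity`).
* If `q` is even, every flag `(c, A)` carries exactly one involutory elation of `G` with center `c`
  and axis `A`. The elations with axis `A`, together with the identity, form a group of order
  `q + 2` acting freely on the `q ^ 2` points off `A`, so `q + 2 ∣ q ^ 2`. As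
  `q ^ 2 = (q + 2) * (q - 2) + 4`, this gives `q = 2`.

In the plane of order two the stabilizer of a line acts faithfully on the four points off the line,
and the elations induce all transpositions, so the stabilizer is `S₄` and `|G| = 7 * 24 = 168`. The
group acts faithfully on the simplex code, a vector space of dimension three over the field with
two elements whose nonzero words are the complements of the lines; comparison of orders gives
`G ≅ GL₃(2) = PSL₃(2)`. The elations with axis `B` act trivially on `B`. Finally `S₄` has no element
of order twelve, so it is not dihedral, which gives the second assertion.
-/

open scoped Pointwise

/-- A group action is primitive if it is transitive and every block is trivial
(this is the usual notion of a primitive permutation group). -/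
def IsPrimitiveAction (G X : Type*) [Group G] [MulAction G X] : Prop :=
  MulAction.IsPretransitive G X ∧
    ∀ B : Set X, MulAction.IsBlock G B → B.Subsingleton ∨ B = Set.univ

variable {P : Type*} [Fintype P] [DecidableEq P]

/-- `𝓑` is the block set of a (non-trivial) 2-design with parameters `(v, k, lam)`
on the point set `P`. -/
structure IsDesign (𝓑 : Finset (Finset P)) (v k lam : ℕ) : Prop where
  card_points : Fintype.card P = v
  blocks_card : ∀ B ∈ 𝓑, B.card = k
  two_lt_k : 2 < k
  k_lt_v : k < v - 1
  lam_pos : 0 < lam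
  pair_blocks : ∀ x y : P, x ≠ y → (𝓑.filter fun B => x ∈ B ∧ y ∈ B).card = lam

/-- `G` is an automorphism group of the design with block set `𝓑`:
every element of `G` maps blocks to blocks. -/
def IsAutGroup (G : Subgroup (Equiv.Perm P)) (𝓑 : Finset (Finset P)) : Prop :=
  ∀ g ∈ G, ∀ B ∈ 𝓑, g • B ∈ 𝓑

/-- `G` acts transitively on the flags of the design with block set `𝓑`. -/
def IsFlagTransitive (G : Subgroup (Equiv.Perm P)) (𝓑 : Finset (Finset P)) : Prop :=
  ∀ B₁ ∈ 𝓑, ∀ B₂ ∈ 𝓑, ∀ x₁ ∈ B₁, ∀ x₂ ∈ B₂, ∃ g ∈ G, g • x₁ = x₂ ∧ g • B₁ = B₂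

/-- `G` acts transitively on the blocks of the design with block set `𝓑`. -/
def IsBlockTransitive (G : Subgroup (Equiv.Perm P)) (𝓑 : Finset (Finset P)) : Prop :=
  ∀ B₁ ∈ 𝓑, ∀ B₂ ∈ 𝓑, ∃ g ∈ G, g • B₁ = B₂

/-- The projective special linear group `PSL₃(2)`. -/
abbrev PSL32 :=
  Matrix.SpecialLinearGroup (Fin 3) (ZMod 2) ⧸
    Subgroup.center (Matrix.SpecialLinearGroup (Fin 3) (ZMod 2))

/-! ### Transitive actions of dihedral groups -/

section Dihedral

variable {X : Type*} {n : ℕ} (ψ : DihedralGroup n →* Equiv.Perm X)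

/-- The rotation subgroup is cyclic and all its subgroups are normal, so a rotation fixing one point
of a transitive action lies in the kernel. -/
theorem dihedral_rotation_eq_one (htr : ∀ x y, ∃ d, ψ d x = y) {i : ZMod n} {x : X}
    (h : ψ (.r i) x = x) : ψ (.r i) = 1 := by
  have hinv : ψ (.r (-i)) x = x := by
    have h1 : ψ (.r (-i)) (ψ (.r i) x) = x := by
      rw [← Equiv.Perm.mul_apply, ← map_mul]
      simp
    rwa [h] at h1
  ext y
  obtain ⟨d, rfl⟩ := htr x y
  rw [← Equiv.Perm.mul_apply, ← map_mul, Equiv.Perm.one_apply]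
  rcases d with j | j
  · rw [DihedralGroup.r_mul_r, add_comm, ← DihedralGroup.r_mul_r, map_mul, Equiv.Perm.mul_apply, h]
  · have : DihedralGroup.r i * .sr j = .sr j * .r (-i) := by
      simp [sub_eq_add_neg]
    rw [this, map_mul, Equiv.Perm.mul_apply, hinv]

/-- Point stabilizers in a transitive dihedral permutation group have order at most two. -/
theorem dihedral_stabilizer_unique (htr : ∀ x y, ∃ d, ψ d x = y) {d e : DihedralGroup n} {x : X}
    (hd : ψ d x = x) (he : ψ e x = x) (hd1 : ψ d ≠ 1) (he1 : ψ e ≠ 1) : ψ d = ψ e := by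
  rcases d with i | i
  · exact absurd (dihedral_rotation_eq_one ψ htr hd) hd1
  rcases e with j | j
  · exact absurd (dihedral_rotation_eq_one ψ htr he) he1
  have h : ψ (.r (j - i)) x = x := by
    rw [← DihedralGroup.sr_mul_sr, map_mul, Equiv.Perm.mul_apply, he, hd]
  have h1 := dihedral_rotation_eq_one ψ htr h
  rw [← DihedralGroup.sr_mul_sr, map_mul] at h1
  have h2 : ψ (.sr j) * ψ (.sr j) = 1 := by
    rw [← map_mul, DihedralGroup.sr_mul_sr, sub_self, ← DihedralGroup.one_def, map_one]
  rw [mul_eq_one_iff_eq_inv] at h1 h2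
  exact h1.trans h2.symm

/-- A nontrivial element of a transitive dihedral permutation group fixes at most two points: the
points fixed by a reflection are permuted regularly by the rotations of order dividing two. -/
theorem dihedral_eq_one_of_three_fixed [NeZero n] (htr : ∀ x y, ∃ d, ψ d x = y)
    {d : DihedralGroup n}
    {x y z : X} (hx : ψ d x = x) (hy : ψ d y = y) (hz : ψ d z = z)
    (hxy : x ≠ y) (hxz : x ≠ z) (hyz : y ≠ z) : ψ d = 1 := by
  rcases d with i | i
  · exact dihedral_rotation_eq_one ψ htr hx
  exfalso
  have key : ∀ w, ψ (.sr i) w = w → x ≠ w →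
      ∃ a : ℕ, (ψ (.r 1) ^ a) x = w ∧ orderOf (ψ (.r 1)) ∣ 2 * a ∧ ¬ orderOf (ψ (.r 1)) ∣ a := by
    intro w hw hne
    have h1 : ∃ j : ZMod n, ψ (.r j) x = w := by
      obtain ⟨e, he⟩ := htr x w
      rcases e with j | j
      · exact ⟨j, he⟩
      · refine ⟨i - j, ?_⟩
        rw [← DihedralGroup.sr_mul_sr, map_mul, Equiv.Perm.mul_apply, hx, he]
    obtain ⟨j, hj⟩ := h1
    have h2 : ψ (.r (-j)) x = w := by
      have : DihedralGroup.r (-j) * .sr i = .sr i * .r j := by simp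
      calc ψ (.r (-j)) x = ψ (.r (-j) * .sr i) x := by
            rw [map_mul, Equiv.Perm.mul_apply, hx]
        _ = w := by rw [this, map_mul, Equiv.Perm.mul_apply, hj, hw]
    have h3 : ψ (.r (j + j)) = 1 := by
      apply dihedral_rotation_eq_one ψ htr (x := x)
      rw [← DihedralGroup.r_mul_r, map_mul, Equiv.Perm.mul_apply, hj, ← h2,
        ← Equiv.Perm.mul_apply, ← map_mul]
      simp
    have h4 : ψ (.r 1) ^ j.val = ψ (.r j) := by
      rw [← map_pow, DihedralGroup.r_one_pow, ZMod.natCast_zmod_val]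
    refine ⟨j.val, by rw [h4, hj], ?_, ?_⟩
    · rw [orderOf_dvd_iff_pow_eq_one, two_mul, pow_add, h4, ← map_mul, DihedralGroup.r_mul_r, h3]
    · rw [orderOf_dvd_iff_pow_eq_one, h4]
      intro h
      rw [h] at hj
      exact hne hj
  obtain ⟨a, ha, ⟨s, hs⟩, ha'⟩ := key y hy hxy
  obtain ⟨b, hb, ⟨t, ht⟩, hb'⟩ := key z hz hxz
  apply hyz
  rw [← ha, ← hb]
  congr 1
  rw [pow_eq_pow_iff_modEq]
  have hodd : ∀ {c u : ℕ}, 2 * c = orderOf (ψ (.r 1)) * u → ¬ orderOf (ψ (.r 1)) ∣ c →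
      ∃ u', u = 2 * u' + 1 := by
    intro c u hc hn
    rcases Nat.even_or_odd' u with ⟨u', h | h⟩
    · exact absurd ⟨u', by rw [h] at hc; linarith⟩ hn
    · exact ⟨u', h⟩
  obtain ⟨s', rfl⟩ := hodd hs ha'
  obtain ⟨t', rfl⟩ := hodd ht hb'
  have : (a : ℤ) ≡ b [ZMOD orderOf (ψ (.r 1))] := by
    rw [Int.modEq_iff_dvd]
    refine ⟨t' - s', ?_⟩
    zify at hs ht
    linarith
  exact (Int.natCast_modEq_iff).1 this

end Dihedral

/-! ### Projective planes -/

/-- `𝓑` is the line set of a projective plane of order `q ≥ 2` on the point set `P`. The numerical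
conditions are consequences of the incidence axioms; carrying them along is convenient. -/
structure IsPlane (𝓑 : Finset (Finset P)) (q : ℕ) : Prop where
  join : ∀ x y : P, x ≠ y → ∃ B ∈ 𝓑, x ∈ B ∧ y ∈ B
  join_unique : ∀ x y : P, x ≠ y → ∀ B ∈ 𝓑, ∀ B' ∈ 𝓑, x ∈ B → y ∈ B → x ∈ B' → y ∈ B' → B = B'
  meet : ∀ B ∈ 𝓑, ∀ B' ∈ 𝓑, ∃ x, x ∈ B ∧ x ∈ B'
  card_line : ∀ B ∈ 𝓑, B.card = q + 1
  card_pencil : ∀ x : P, (𝓑.filter fun B => x ∈ B).card = q + 1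
  card_points : Fintype.card P = q ^ 2 + q + 1
  two_le : 2 ≤ q

theorem IsDesign.isPlane {𝓑 : Finset (Finset P)} {v k : ℕ} (hD : IsDesign 𝓑 v k 1)
    (hsym : 𝓑.card = v) : ∃ q, k = q + 1 ∧ v = q ^ 2 + q + 1 ∧ IsPlane 𝓑 q := by
  classical
  have hjoin : ∀ x y : P, x ≠ y → ∃ B ∈ 𝓑, x ∈ B ∧ y ∈ B := by
    intro x y h
    have := hD.pair_blocks x y h
    obtain ⟨B, hB⟩ := Finset.card_pos.1 (by rw [this]; exact one_pos)
    rw [Finset.mem_filter] at hB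
    exact ⟨B, hB.1, hB.2⟩
  have huniq : ∀ x y : P, x ≠ y → ∀ B ∈ 𝓑, ∀ B' ∈ 𝓑, x ∈ B → y ∈ B → x ∈ B' → y ∈ B' →
      B = B' := by
    intro x y h B hB B' hB' h1 h2 h3 h4
    exact Finset.card_le_one.1 (hD.pair_blocks x y h).le B
      (Finset.mem_filter.2 ⟨hB, h1, h2⟩) B' (Finset.mem_filter.2 ⟨hB', h3, h4⟩)
  have hk := hD.two_lt_k
  have hv := hD.k_lt_v
  have hcv := hD.card_points
  let L := {B : Finset P // B ∈ 𝓑}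
  let : Membership P L := ⟨fun B x => x ∈ B.1⟩
  have hmem : ∀ (x : P) (l : L), x ∈ l ↔ x ∈ l.1 := fun _ _ => Iff.rfl
  have hcardL : Fintype.card L = v := by rw [Fintype.card_coe, hsym]
  have hpc : ∀ l : L, Configuration.pointCount P l = k := by
    intro l
    unfold Configuration.pointCount
    simp only [hmem]
    rw [Nat.card_eq_fintype_card, Fintype.card_coe]
    exact hD.blocks_card _ l.2
  -- No point lies on all blocks, since two blocks through it and a third one would force `k = 1`.
  let hlines : Configuration.HasLines P L :=
    { exists_point := by
        intro l
        obtain ⟨x, hx⟩ : ∃ x, x ∉ l.1 := by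
          by_contra! h
          have : l.1.card = Fintype.card P := by
            rw [Finset.eq_univ_of_forall h, Finset.card_univ]
          rw [hD.blocks_card _ l.2] at this
          omega
        exact ⟨x, hx⟩
      exists_line := by
        intro x
        by_contra! h
        have h' : ∀ B ∈ 𝓑, x ∈ B := fun B hB => h ⟨B, hB⟩
        obtain ⟨y, hy⟩ : ∃ y, y ≠ x := by
          by_contra! hh
          have : Fintype.card P ≤ 1 := Fintype.card_le_one_iff.2 fun a b => by rw [hh a, hh b]
          omega
        obtain ⟨B, hB, hxB, hyB⟩ := hjoin x y hy.symm
        obtain ⟨z, hz⟩ : ∃ z, z ∉ B := by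
          by_contra! hh
          have : B.card = Fintype.card P := by
            rw [Finset.eq_univ_of_forall hh, Finset.card_univ]
          rw [hD.blocks_card _ hB] at this
          omega
        obtain ⟨C, hC, hyC, hzC⟩ := hjoin y z (by rintro rfl; exact hz hyB)
        have := huniq x y hy.symm B hB C hC hxB hyB (h' C hC) hyC
        exact hz (this ▸ hzC)
      eq_or_eq := by
        intro p₁ p₂ l₁ l₂ h1 h2 h3 h4
        by_cases h : p₁ = p₂
        · exact Or.inl h
        · exact Or.inr (Subtype.ext (huniq p₁ p₂ h _ l₁.2 _ l₂.2 h1 h2 h3 h4))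
      mkLine := fun {x y} h => ⟨(hjoin x y h).choose, (hjoin x y h).choose_spec.1⟩
      mkLine_ax := fun {x y} h => (hjoin x y h).choose_spec.2 }
  let hpts : Configuration.HasPoints P L :=
    Configuration.HasLines.hasPoints (by rw [hcardL, hcv])
  -- Three non-collinear points: two on a block, and one off it.
  have hconf : ∃ (p₁ p₂ p₃ : P) (l₁ l₂ l₃ : L),
      p₁ ∉ l₂ ∧ p₁ ∉ l₃ ∧ p₂ ∉ l₁ ∧ p₂ ∈ l₂ ∧ p₂ ∈ l₃ ∧ p₃ ∉ l₁ ∧ p₃ ∈ l₂ ∧ p₃ ∉ l₃ := by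
    obtain ⟨B, hB⟩ : 𝓑.Nonempty := by rw [← Finset.card_pos]; omega
    have hthird : ∀ C ∈ 𝓑, ∀ a b : P, ∃ c ∈ C, c ≠ a ∧ c ≠ b := by
      intro C hC a b
      obtain ⟨c, hc⟩ : ((C.erase a).erase b).Nonempty := by
        have h2 := Finset.pred_card_le_card_erase (s := C) (a := a)
        have h3 := Finset.pred_card_le_card_erase (s := C.erase a) (a := b)
        rw [hD.blocks_card C hC] at h2
        rw [← Finset.card_pos]
        omega
      simp only [Finset.mem_erase] at hc
      exact ⟨c, hc.2.2, hc.2.1, hc.1⟩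
    obtain ⟨p, hpB⟩ := Configuration.Nondegenerate.exists_point (P := P) (⟨B, hB⟩ : L)
    replace hpB : p ∉ B := hpB
    obtain ⟨a, haB, -, -⟩ := hthird B hB p p
    obtain ⟨b, hbB, hba, -⟩ := hthird B hB a a
    obtain ⟨c, hcB, hca, hcb⟩ := hthird B hB a b
    have hpB' : ∀ x ∈ B, p ≠ x := by rintro x hx rfl; exact hpB hx
    obtain ⟨M, hM, hpM, hbM⟩ := hjoin p b (hpB' b hbB)
    obtain ⟨N, hN, hpN, hcN⟩ := hjoin p c (hpB' c hcB)
    obtain ⟨z, hzM, hzp, hzb⟩ := hthird M hM p b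
    have haM : a ∉ M := fun h => hpB (huniq a b hba.symm B hB M hM haB hbB h hbM ▸ hpM)
    have haz : a ≠ z := by rintro rfl; exact haM hzM
    obtain ⟨K, hK, haK, hzK⟩ := hjoin a z haz
    refine ⟨p, a, b, ⟨N, hN⟩, ⟨B, hB⟩, ⟨K, hK⟩, hpB, ?_, ?_, haB, haK, ?_, hbB, ?_⟩
    · intro h
      exact haM (huniq p z hzp.symm K hK M hM h hzK hpM hzM ▸ haK)
    · intro h
      exact hpB (huniq a c hca.symm B hB N hN haB hcB h hcN ▸ hpN)
    · intro h
      exact hpB (huniq b c hcb.symm B hB N hN hbB hcB h hcN ▸ hpN)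
    · intro h
      exact haM (huniq b z hzb.symm K hK M hM h hzK hbM hzM ▸ haK)
  let : Configuration.ProjectivePlane P L :=
    { hpts, hlines with exists_config := hconf }
  have hlc := fun x : P => Configuration.ProjectivePlane.lineCount_eq (L := L) x
  obtain ⟨B₀, hB₀⟩ : 𝓑.Nonempty := by rw [← Finset.card_pos]; omega
  have hq := Configuration.ProjectivePlane.pointCount_eq (P := P) (⟨B₀, hB₀⟩ : L)
  rw [hpc] at hq
  have hcp := Configuration.ProjectivePlane.card_points P L
  refine ⟨Configuration.ProjectivePlane.order P L, hq, by rw [← hcv, hcp], hjoin, huniq, ?_, ?_,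
    ?_, hcp, by change 2 < k at hk; rw [hq] at hk; exact Nat.le_of_lt_succ hk⟩
  · intro B hB B' hB'
    by_cases h : B = B'
    · subst h
      obtain ⟨x, hx⟩ := Finset.card_pos.1 (by rw [hD.blocks_card B hB]; omega)
      exact ⟨x, hx, hx⟩
    · have hne : (⟨B, hB⟩ : L) ≠ ⟨B', hB'⟩ := fun h' => h (congrArg Subtype.val h')
      exact ⟨_, Configuration.HasPoints.mkPoint_ax hne⟩
  · intro B hB
    rw [hD.blocks_card B hB, hq]
  · intro x
    rw [← hlc x]
    unfold Configuration.lineCount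
    simp only [hmem]
    rw [Nat.card_eq_fintype_card, ← Fintype.card_coe]
    refine Fintype.card_congr ⟨fun B => ⟨⟨B.1, (Finset.mem_filter.1 B.2).1⟩,
      (Finset.mem_filter.1 B.2).2⟩, fun l => ⟨l.1.1, Finset.mem_filter.2 ⟨l.1.2, l.2⟩⟩, ?_, ?_⟩
    · intro B; rfl
    · intro l; rfl

section Plane

variable {𝓑 : Finset (Finset P)} {q : ℕ}

theorem IsPlane.exists_notMem (hp : IsPlane 𝓑 q) {A : Finset P} (hA : A ∈ 𝓑) : ∃ x, x ∉ A := by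
  by_contra! h
  have h1 : A.card = Fintype.card P := by rw [Finset.eq_univ_of_forall h, Finset.card_univ]
  rw [hp.card_line A hA, hp.card_points] at h1
  have := hp.two_le
  nlinarith

theorem IsPlane.exists_notMem_two (hp : IsPlane 𝓑 q) {A A' : Finset P} (hA : A ∈ 𝓑)
    (hA' : A' ∈ 𝓑) : ∃ x, x ∉ A ∧ x ∉ A' := by
  by_contra! h
  obtain ⟨z, hz, hz'⟩ := hp.meet A hA A' hA'
  have h1 : A ∪ A'.erase z = Finset.univ := by
    ext x
    simp only [Finset.mem_union, Finset.mem_erase, Finset.mem_univ, iff_true]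
    by_cases hx : x ∈ A
    · exact Or.inl hx
    · exact Or.inr ⟨by rintro rfl; exact hx hz, h x hx⟩
  have h2 := Finset.card_union_le A (A'.erase z)
  rw [h1, Finset.card_univ, Finset.card_erase_of_mem hz', hp.card_line A hA, hp.card_line A' hA',
    hp.card_points] at h2
  have := hp.two_le
  have h3 : q + 1 - 1 = q := rfl
  rw [h3] at h2
  nlinarith

/-- Through every point there are at least `q - 1` lines different from two given ones. -/
theorem IsPlane.exists_line_ne (hp : IsPlane 𝓑 q) (x : P) (A A' : Finset P) :
    ∃ L ∈ 𝓑, x ∈ L ∧ L ≠ A ∧ L ≠ A' := by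
  have h1 : 0 < (((𝓑.filter fun B => x ∈ B).erase A).erase A').card := by
    have h2 := Finset.pred_card_le_card_erase (s := 𝓑.filter fun B => x ∈ B) (a := A)
    have h3 := Finset.pred_card_le_card_erase
      (s := (𝓑.filter fun B => x ∈ B).erase A) (a := A')
    rw [hp.card_pencil] at h2
    have := hp.two_le
    omega
  obtain ⟨L, hL⟩ := Finset.card_pos.1 h1
  simp only [Finset.mem_erase, Finset.mem_filter] at hL
  exact ⟨L, hL.2.2.1, hL.2.2.2, hL.2.1, hL.1⟩

/-- Every line has a point different from two given ones. -/
theorem IsPlane.exists_mem_ne (hp : IsPlane 𝓑 q) {A : Finset P} (hA : A ∈ 𝓑) (a b : P) :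
    ∃ x ∈ A, x ≠ a ∧ x ≠ b := by
  have h1 : 0 < ((A.erase a).erase b).card := by
    have h2 := Finset.pred_card_le_card_erase (s := A) (a := a)
    have h3 := Finset.pred_card_le_card_erase (s := A.erase a) (a := b)
    rw [hp.card_line A hA] at h2
    have := hp.two_le
    omega
  obtain ⟨L, hL⟩ := Finset.card_pos.1 h1
  simp only [Finset.mem_erase] at hL
  exact ⟨L, hL.2.2, hL.2.1, hL.1⟩

theorem IsPlane.meet_unique (hp : IsPlane 𝓑 q) {A B : Finset P} (hA : A ∈ 𝓑) (hB : B ∈ 𝓑)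
    (h : A ≠ B) {x y : P} (hx : x ∈ A) (hx' : x ∈ B) (hy : y ∈ A) (hy' : y ∈ B) : x = y := by
  by_contra hxy
  exact h (hp.join_unique x y hxy A hA B hB hx hy hx' hy')

end Plane

/-! ### Collineations and involutions -/

section Collineation

variable {𝓑 : Finset (Finset P)} {q : ℕ} {t : Equiv.Perm P}

omit [Fintype P] in
theorem apply_mem_smul_iff (t : Equiv.Perm P) (B : Finset P) (x : P) : t x ∈ t • B ↔ x ∈ B :=
  Finset.smul_mem_smul_finset_iff t

omit [Fintype P] in
theorem apply_mem_of_smul_eq {B : Finset P} (h : t • B = B) {x : P} (hx : x ∈ B) : t x ∈ B := by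
  rw [← h]; exact (apply_mem_smul_iff t B x).2 hx

theorem IsPlane.smul_eq_of_fixed (hp : IsPlane 𝓑 q) (ht : ∀ B ∈ 𝓑, t • B ∈ 𝓑) {x y : P}
    (hxy : x ≠ y) (hx : t x = x) (hy : t y = y) {B : Finset P} (hB : B ∈ 𝓑) (hxB : x ∈ B)
    (hyB : y ∈ B) : t • B = B := by
  have h1 := (apply_mem_smul_iff t B x).2 hxB
  have h2 := (apply_mem_smul_iff t B y).2 hyB
  rw [hx] at h1
  rw [hy] at h2
  exact hp.join_unique x y hxy _ (ht B hB) B hB h1 h2 hxB hyB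

omit [Fintype P] [DecidableEq P] in
theorem apply_apply_of_mul_self (h2 : t * t = 1) (x : P) : t (t x) = x := by
  rw [← Equiv.Perm.mul_apply, h2, Equiv.Perm.one_apply]

theorem IsPlane.smul_eq_of_swap (hp : IsPlane 𝓑 q) (ht : ∀ B ∈ 𝓑, t • B ∈ 𝓑)
    (h2 : t * t = 1) {x : P} (hx : t x ≠ x) {B : Finset P} (hB : B ∈ 𝓑) (hxB : x ∈ B)
    (hyB : t x ∈ B) : t • B = B := by
  have h3 := (apply_mem_smul_iff t B x).2 hxB
  have h4 := (apply_mem_smul_iff t B (t x)).2 hyB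
  rw [apply_apply_of_mul_self h2] at h4
  exact hp.join_unique x (t x) hx.symm _ (ht B hB) B hB h4 h3 hxB hyB

theorem IsPlane.fixed_of_meet (hp : IsPlane 𝓑 q) {A B : Finset P} (hA : A ∈ 𝓑) (hB : B ∈ 𝓑)
    (hAB : A ≠ B) (h1 : t • A = A) (h2 : t • B = B) {x : P} (hxA : x ∈ A) (hxB : x ∈ B) :
    t x = x :=
  hp.meet_unique hA hB hAB (apply_mem_of_smul_eq h1 hxA) (apply_mem_of_smul_eq h2 hxB) hxA hxB

/-- A line that is not fixed by an involution meets its image in a fixed point. -/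
theorem IsPlane.exists_fixed_mem (hp : IsPlane 𝓑 q) (ht : ∀ B ∈ 𝓑, t • B ∈ 𝓑)
    (h2 : t * t = 1) {B : Finset P} (hB : B ∈ 𝓑) (h : t • B ≠ B) : ∃ x ∈ B, t x = x := by
  obtain ⟨x, hx, hx'⟩ := hp.meet B hB (t • B) (ht B hB)
  refine ⟨x, hx, ?_⟩
  have h3 := (apply_mem_smul_iff t _ x).2 hx
  have h4 := (apply_mem_smul_iff t _ x).2 hx'
  rw [smul_smul, h2, one_smul] at h4
  exact hp.meet_unique hB (ht B hB) h.symm h4 h3 hx hx'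

/-- A collineation with an axis and two fixed points off the axis is trivial. -/
theorem IsPlane.eq_one_of_axis (hp : IsPlane 𝓑 q) (ht : ∀ B ∈ 𝓑, t • B ∈ 𝓑) {A : Finset P}
    (hA : A ∈ 𝓑) (hfix : ∀ x ∈ A, t x = x) {c d : P} (hc : c ∉ A) (hd : d ∉ A) (hcd : c ≠ d)
    (htc : t c = c) (htd : t d = d) : t = 1 := by
  have hline : ∀ c, c ∉ A → t c = c → ∀ M ∈ 𝓑, c ∈ M → t • M = M := by
    intro c hc htc M hM hcM
    obtain ⟨a, haA, haM⟩ := hp.meet A hA M hM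
    exact hp.smul_eq_of_fixed ht (by rintro rfl; exact hc haA) htc (hfix a haA) hM hcM haM
  have key : ∀ c d, c ∉ A → d ∉ A → c ≠ d → t c = c → t d = d → ∀ M ∈ 𝓑, c ∈ M → d ∈ M →
      ∀ x, x ∉ M → t x = x := by
    intro c d hc hd hcd htc htd M hM hcM hdM x hx
    obtain ⟨K, hK, hcK, hxK⟩ := hp.join c x (by rintro rfl; exact hx hcM)
    obtain ⟨L, hL, hdL, hxL⟩ := hp.join d x (by rintro rfl; exact hx hdM)
    refine hp.fixed_of_meet hK hL ?_ (hline c hc htc K hK hcK) (hline d hd htd L hL hdL) hxK hxL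
    rintro rfl
    exact hx (hp.join_unique c d hcd K hK M hM hcK hdL hcM hdM ▸ hxK)
  obtain ⟨M, hM, hcM, hdM⟩ := hp.join c d hcd
  obtain ⟨y, hyA, hyM⟩ := hp.exists_notMem_two hA hM
  have hy := key c d hc hd hcd htc htd M hM hcM hdM y hyM
  ext x
  rw [Equiv.Perm.one_apply]
  by_cases hxM : x ∈ M
  · have hcy : c ≠ y := by rintro rfl; exact hyM hcM
    obtain ⟨N, hN, hcN, hyN⟩ := hp.join c y hcy
    by_cases hxN : x ∈ N
    · rw [hp.meet_unique hM hN (by rintro rfl; exact hyM hyN) hxM hxN hcM hcN, htc]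
    · exact key c y hc hyA hcy htc hy N hN hcN hyN x hxN
  · exact key c d hc hd hcd htc htd M hM hcM hdM x hxM

omit [Fintype P] in
/-- An involution has an even number of non-fixed points on each line it fixes. -/
theorem even_card_moved (h2 : t * t = 1) {M : Finset P} (hM : t • M = M) :
    Even (M.filter fun x => t x ≠ x).card := by
  have h : ∑ x ∈ M.filter (fun x => t x ≠ x), (1 : ZMod 2) = 0 := by
    refine Finset.sum_involution (fun x _ => t x) (fun _ _ => by decide) ?_ ?_ ?_
    · intro x hx _
      exact (Finset.mem_filter.1 hx).2
    · intro x hx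
      rw [Finset.mem_filter] at hx ⊢
      exact ⟨apply_mem_of_smul_eq hM hx.1, fun h => hx.2 (t.injective h)⟩
    · intro x hx
      exact apply_apply_of_mul_self h2 x
  rw [Finset.sum_const, nsmul_eq_mul, mul_one] at h
  rw [even_iff_two_dvd]
  exact (ZMod.natCast_eq_zero_iff _ _).1 h

/-- On a line fixed by an involution of a plane of order `q`, the fixed points are as many as `q + 1`
modulo two. -/
theorem IsPlane.even_card_fixed_iff (hp : IsPlane 𝓑 q) (h2 : t * t = 1) {M : Finset P}
    (hM : M ∈ 𝓑) (hfix : t • M = M) :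
    Even (M.filter fun x => t x = x).card ↔ Even (q + 1) := by
  have h := Finset.card_filter_add_card_filter_not (s := M) (fun x => t x = x)
  rw [hp.card_line M hM] at h
  rw [← h, Nat.even_add]
  exact (iff_true_right (even_card_moved h2 hfix)).symm

/-- An involution that is trivial on each line on which it has three fixed points has an axis. This
excludes Baer involutions. -/
theorem IsPlane.exists_axis (hp : IsPlane 𝓑 q) (ht : ∀ B ∈ 𝓑, t • B ∈ 𝓑) (h1 : t ≠ 1)
    (h2 : t * t = 1)
    (h3 : ∀ B ∈ 𝓑, t • B = B → ∀ x ∈ B, ∀ y ∈ B, ∀ z ∈ B, x ≠ y → x ≠ z → y ≠ z →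
      t x = x → t y = y → t z = z → ∀ w ∈ B, t w = w) :
    ∃ A ∈ 𝓑, ∀ x ∈ A, t x = x := by
  by_contra! hno
  obtain ⟨X, hX⟩ : ∃ X, t X ≠ X := by
    by_contra! h
    exact h1 (Equiv.ext h)
  have hmoved : ∀ X, t X ≠ X → ∀ M ∈ 𝓑, X ∈ M → t • M = M → ∀ L ∈ 𝓑, X ∈ L → L ≠ M →
      ∃ c ∈ L, t c = c ∧ c ≠ X ∧ c ∉ M := by
    intro X hX M hM hXM hfM L hL hXL hLM
    have hL' : t • L ≠ L := fun h => hX (hp.fixed_of_meet hL hM hLM h hfM hXL hXM)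
    obtain ⟨c, hc, htc⟩ := hp.exists_fixed_mem ht h2 hL hL'
    have hcX : c ≠ X := by rintro rfl; exact hX htc
    exact ⟨c, hc, htc, hcX, fun hcM => hcX (hp.meet_unique hL hM hLM hc hcM hXL hXM)⟩
  -- A moved point `X` lies on a fixed line `M`. Two other lines through `X` are moved, so they carry
  -- fixed points `c`, `d` off `M`. The line `cd` is fixed and meets `M` in a third fixed point.
  obtain ⟨M, hM, hXM, htXM⟩ := hp.join X (t X) hX.symm
  have hfM := hp.smul_eq_of_swap ht h2 hX hM hXM htXM
  obtain ⟨L, hL, hXL, hLM, -⟩ := hp.exists_line_ne X M M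
  obtain ⟨L', hL', hXL', hLM', hLL'⟩ := hp.exists_line_ne X M L
  obtain ⟨c, hcL, htc, hcX, hcM⟩ := hmoved X hX M hM hXM hfM L hL hXL hLM
  obtain ⟨d, hdL, htd, hdX, hdM⟩ := hmoved X hX M hM hXM hfM L' hL' hXL' hLM'
  have hcd : c ≠ d := by
    rintro rfl
    exact hcX (hp.meet_unique hL hL' hLL'.symm hcL hdL hXL hXL')
  obtain ⟨N, hN, hcN, hdN⟩ := hp.join c d hcd
  have hfN := hp.smul_eq_of_fixed ht hcd htc htd hN hcN hdN
  obtain ⟨e, heN, heM⟩ := hp.meet N hN M hM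
  have hte := hp.fixed_of_meet hN hM (by rintro rfl; exact hcM hcN) hfN hfM heN heM
  obtain ⟨w, hw, hw'⟩ := hno N hN
  exact hw' (h3 N hN hfN c hcN d hdN e heN hcd (by rintro rfl; exact hcM heM)
    (by rintro rfl; exact hdM heM) htc htd hte w hw)

end Collineation

/-! ### Planes of odd order -/

/-- Counting form of the friendship theorem: a plane of order `q ≥ 2` has no polarity `A` without
absolute points. Modulo a prime `p` dividing `q`, the incidence matrix `M` of points against their
polars satisfies `M ^ 2 = M ^ p = J`, so `0 = (tr M) ^ p = tr J = 1`. -/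
theorem false_of_polarity {q : ℕ} (hq : 2 ≤ q) (hcard : Fintype.card P = q ^ 2 + q + 1)
    (A : P → Finset P) (hsymm : ∀ x y, y ∈ A x ↔ x ∈ A y) (hirr : ∀ x, x ∉ A x)
    (hdeg : ∀ x, (A x).card = q + 1) (hinter : ∀ x y, x ≠ y → (A x ∩ A y).card = 1) : False := by
  have hpr : Fact q.minFac.Prime := ⟨Nat.minFac_prime (by omega)⟩
  have hq0 : (q : ZMod q.minFac) = 0 := (ZMod.natCast_eq_zero_iff _ _).2 (Nat.minFac_dvd q)
  let M : Matrix P P (ZMod q.minFac) := fun x y => if y ∈ A x then 1 else 0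
  let J : Matrix P P (ZMod q.minFac) := fun _ _ => 1
  have h2 : M * M = J := by
    ext x y
    have h : ∀ z, M x z * M z y = if z ∈ A x ∩ A y then 1 else 0 := by
      intro z
      have := hsymm z y
      simp only [M, Finset.mem_inter]
      by_cases h1 : z ∈ A x <;> by_cases h2 : z ∈ A y <;> simp [h1, h2, this]
    rw [Matrix.mul_apply, Finset.sum_congr rfl fun z _ => h z, Finset.sum_boole,
      Finset.filter_univ_mem]
    change _ = 1
    by_cases hxy : x = y
    · subst hxy
      rw [Finset.inter_self, hdeg]
      push_cast
      rw [hq0, zero_add]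
    · rw [hinter x y hxy, Nat.cast_one]
  have hJ : M * J = J := by
    ext x y
    rw [Matrix.mul_apply]
    simp only [M, J, mul_one]
    rw [Finset.sum_boole, Finset.filter_univ_mem, hdeg]
    push_cast
    rw [hq0, zero_add]
  have hpow : ∀ m, M ^ (m + 2) = J := by
    intro m
    induction m with
    | zero => rw [pow_two, h2]
    | succ m ih => rw [add_right_comm, pow_succ', ih, hJ]
  have htr := ZMod.trace_pow_card M
  obtain ⟨m, hm⟩ := Nat.exists_eq_add_of_le' hpr.out.two_le
  have hMp : M ^ q.minFac = J := by
    have := hpow m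
    rwa [← hm] at this
  have hM0 : M.trace = 0 := by
    simp [Matrix.trace, Matrix.diag, M, hirr]
  have hJ1 : J.trace = 1 := by
    have : J.trace = (Fintype.card P : ZMod q.minFac) := by
      simp [Matrix.trace, Matrix.diag, J]
    rw [this, hcard]
    push_cast
    rw [hq0]
    ring
  rw [hMp, hM0, hJ1, zero_pow hpr.out.ne_zero] at htr
  exact one_ne_zero htr

/-- A flag-transitive collineation group `G` of a projective plane of order `q` that contains an
involution and induces on every line a group with the two features of a transitive dihedral group
used below: a point stabilizer has at most one nontrivial element, and a nontrivial element fixes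
at most two points. -/
structure IsDihedralPlane (𝓑 : Finset (Finset P)) (G : Subgroup (Equiv.Perm P)) (q : ℕ) : Prop
    extends IsPlane 𝓑 q where
  aut : ∀ g ∈ G, ∀ B ∈ 𝓑, g • B ∈ 𝓑
  flag : IsFlagTransitive G 𝓑
  agree : ∀ B ∈ 𝓑, ∀ g ∈ G, ∀ h ∈ G, g • B = B → h • B = B → ∀ x ∈ B, g x = x → h x = x →
    (∃ y ∈ B, g y ≠ y) → (∃ y ∈ B, h y ≠ y) → ∀ y ∈ B, g y = h y
  three : ∀ B ∈ 𝓑, ∀ g ∈ G, g • B = B → ∀ x ∈ B, ∀ y ∈ B, ∀ z ∈ B, x ≠ y → x ≠ z → y ≠ z →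
    g x = x → g y = y → g z = z → ∀ w ∈ B, g w = w
  involution : ∃ t ∈ G, t ≠ 1 ∧ t * t = 1

section DihedralPlane

variable {𝓑 : Finset (Finset P)} {G : Subgroup (Equiv.Perm P)} {q : ℕ}

theorem IsDihedralPlane.exists_map_point (hp : IsDihedralPlane 𝓑 G q) (x y : P) :
    ∃ g ∈ G, g x = y := by
  obtain ⟨L, hL, hxL, -⟩ := hp.exists_line_ne x ∅ ∅
  obtain ⟨M, hM, hyM, -⟩ := hp.exists_line_ne y ∅ ∅
  obtain ⟨g, hg, h1, -⟩ := hp.flag L hL M hM x hxL y hyM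
  exact ⟨g, hg, h1⟩

/-- When the order is odd, every point is the center of an involutory homology. -/
theorem IsDihedralPlane.exists_homology (hp : IsDihedralPlane 𝓑 G q) (hq : Odd q) (c : P) :
    ∃ t ∈ G, ∃ A ∈ 𝓑, c ∉ A ∧ ∀ y, t y = y ↔ y = c ∨ y ∈ A := by
  have hex : ∃ c, ∃ t ∈ G, ∃ A ∈ 𝓑, c ∉ A ∧ ∀ y, t y = y ↔ y = c ∨ y ∈ A := by
    obtain ⟨t, ht, h1, h2⟩ := hp.involution
    have haut := hp.aut t ht
    obtain ⟨A, hA, hfix⟩ := hp.exists_axis haut h1 h2 fun B hB => hp.three B hB t ht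
    have hc : ∃ c, c ∉ A ∧ t c = c := by
      obtain ⟨X, hX⟩ := hp.exists_notMem hA
      by_cases htX : t X = X
      · exact ⟨X, hX, htX⟩
      obtain ⟨M, hM, hXM, htXM⟩ := hp.join X (t X) (Ne.symm htX)
      have hfM := hp.smul_eq_of_swap haut h2 htX hM hXM htXM
      have heven := (hp.even_card_fixed_iff h2 hM hfM).2 hq.add_one
      obtain ⟨e, heA, heM⟩ := hp.meet A hA M hM
      have he : e ∈ M.filter fun x => t x = x := Finset.mem_filter.2 ⟨heM, hfix e heA⟩
      have hpos := Finset.card_pos.2 ⟨e, he⟩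
      have hlt : 1 < (M.filter fun x => t x = x).card := by
        obtain ⟨m, hm⟩ := heven
        omega
      obtain ⟨c, hc, hce⟩ := Finset.exists_mem_ne hlt e
      rw [Finset.mem_filter] at hc
      refine ⟨c, fun hcA => hce ?_, hc.2⟩
      exact hp.meet_unique hA hM (by rintro rfl; exact hX hXM) hcA hc.1 heA heM
    obtain ⟨c, hcA, htc⟩ := hc
    refine ⟨c, t, ht, A, hA, hcA, fun y => ⟨fun hy => ?_, ?_⟩⟩
    · by_contra! hne
      exact h1 (hp.eq_one_of_axis haut hA hfix hcA hne.2 hne.1.symm htc hy)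
    · rintro (rfl | hy)
      · exact htc
      · exact hfix y hy
  obtain ⟨d, t, ht, A, hA, hdA, hfix⟩ := hex
  obtain ⟨g, hg, rfl⟩ := hp.exists_map_point d c
  refine ⟨g * t * g⁻¹, G.mul_mem (G.mul_mem hg ht) (G.inv_mem hg), g • A, hp.aut g hg A hA,
    fun h => hdA ((apply_mem_smul_iff g A d).1 h), fun y => ?_⟩
  obtain ⟨z, rfl⟩ := g.surjective y
  rw [apply_mem_smul_iff, g.apply_eq_iff_eq, ← hfix z]
  simp

/-- If the order is odd, mapping the center of an involutory homology to its axis is a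
polarity without absolute points. -/
theorem IsDihedralPlane.even_order (hp : IsDihedralPlane 𝓑 G q) : Even q := by
  by_contra hodd
  rw [Nat.not_even_iff_odd] at hodd
  choose t ht A hA hcA hfix using fun c => hp.exists_homology hodd c
  -- `R x y`: the points `x ≠ y` are the two fixed points of an element of `G` on the line `xy`.
  let R : P → P → Prop := fun x y => x ≠ y ∧ ∃ g ∈ G, ∃ B ∈ 𝓑, g • B = B ∧ x ∈ B ∧ y ∈ B ∧
    g x = x ∧ g y = y ∧ ∃ z ∈ B, g z ≠ z
  have hRsymm : ∀ x y, R x y → R y x := by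
    rintro x y ⟨hne, g, hg, B, hB, h1, h2, h3, h4, h5, h6⟩
    exact ⟨hne.symm, g, hg, B, hB, h1, h3, h2, h5, h4, h6⟩
  have hRof : ∀ x y, y ∈ A x → R x y := by
    intro x y hy
    have hxy : x ≠ y := by rintro rfl; exact hcA x hy
    have hx := (hfix x x).2 (Or.inl rfl)
    have hy' := (hfix x y).2 (Or.inr hy)
    obtain ⟨B, hB, hxB, hyB⟩ := hp.join x y hxy
    obtain ⟨z, hz, hzx, hzy⟩ := hp.exists_mem_ne hB x y
    refine ⟨hxy, t x, ht x, B, hB,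
      hp.smul_eq_of_fixed (hp.aut _ (ht x)) hxy hx hy' hB hxB hyB, hxB, hyB, hx, hy', z, hz, ?_⟩
    intro h
    rcases (hfix x z).1 h with h | h
    · exact hzx h
    · exact hzy (hp.meet_unique (hA x) hB (fun h' => hcA x (h' ▸ hxB)) h hz hy hyB)
  -- On a line, the nontrivial element fixing `x` is unique and has no third fixed point.
  have hRuniq : ∀ x y y', R x y → R x y' → ∀ B ∈ 𝓑, x ∈ B → y ∈ B → y' ∈ B → y = y' := by
    rintro x y y' ⟨hne, g, hg, B, hB, h1, h2, h3, h4, h5, z, hz, h6⟩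
      ⟨hne', g', hg', B', hB', h1', h2', h3', h4', h5', h6'⟩ C hC hxC hyC hyC'
    obtain rfl := hp.join_unique x y hne B hB C hC h2 h3 hxC hyC
    obtain rfl := hp.join_unique x y' hne' B' hB' B hB h2' h3' hxC hyC'
    by_contra hyy
    have := hp.agree B' hB g hg g' hg' h1 h1' x h2 h4 h4' ⟨z, hz, h6⟩ h6' y' h3'
    rw [h5'] at this
    exact h6 (hp.three B' hB g hg h1 x h2 y h3 y' h3' hne hne' hyy h4 h5 this z hz)
  have hRiff : ∀ x y, R x y ↔ y ∈ A x := by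
    refine fun x y => ⟨fun h => ?_, hRof x y⟩
    obtain ⟨B, hB, hxB, hyB⟩ := hp.join x y h.1
    obtain ⟨z, hzA, hzB⟩ := hp.meet (A x) (hA x) B hB
    rwa [hRuniq x y z h (hRof x z hzA) B hB hxB hyB hzB]
  refine false_of_polarity hp.two_le hp.card_points A ?_ hcA (fun x => hp.card_line _ (hA x)) ?_
  · exact fun x y => by rw [← hRiff, ← hRiff]; exact ⟨hRsymm x y, hRsymm y x⟩
  · intro x y hxy
    have hne : A x ≠ A y := by
      intro h
      obtain ⟨B, hB, hxB, hyB⟩ := hp.join x y hxy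
      obtain ⟨z, hzA, hzB⟩ := hp.meet (A x) (hA x) B hB
      exact hxy (hRuniq z x y (hRsymm _ _ (hRof x z hzA)) (hRsymm _ _ (hRof y z (h ▸ hzA)))
        B hB hzB hxB hyB)
    obtain ⟨z, hz, hz'⟩ := hp.meet (A x) (hA x) (A y) (hA y)
    rw [Finset.card_eq_one]
    refine ⟨z, ?_⟩
    ext w
    rw [Finset.mem_inter, Finset.mem_singleton]
    constructor
    · rintro ⟨hw, hw'⟩
      exact hp.meet_unique (hA x) (hA y) hne hw hw' hz hz'
    · rintro rfl
      exact ⟨hz, hz'⟩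

end DihedralPlane

/-! ### Planes of even order -/

theorem card_dvd_card_of_free (E X : Type*) [Group E] [MulAction E X] [Finite E] [Finite X]
    (hfree : ∀ (g : E) (x : X), g • x = x → g = 1) : Nat.card E ∣ Nat.card X := by
  classical
  have := Fintype.ofFinite (Quotient (MulAction.orbitRel E X))
  rw [Nat.card_congr (MulAction.selfEquivSigmaOrbitsQuotientStabilizer E X), Nat.card_sigma]
  refine Finset.dvd_sum fun ω _ => ?_
  have : MulAction.stabilizer E ω.out = ⊥ := by
    rw [eq_bot_iff]
    intro g hg
    exact Subgroup.mem_bot.2 (hfree g _ hg)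
  rw [this, Nat.card_congr QuotientGroup.quotientBot.toEquiv]

/-- `t` is an involutory elation with center `c` and axis `A`: its fixed points are exactly the
points of `A`, and it fixes every line through `c ∈ A`. -/
structure IsElation (𝓑 : Finset (Finset P)) (t : Equiv.Perm P) (c : P) (A : Finset P) : Prop where
  sq : t * t = 1
  center_mem : c ∈ A
  fixed_iff : ∀ y, t y = y ↔ y ∈ A
  line : ∀ L ∈ 𝓑, c ∈ L → t • L = L

section DihedralPlane

variable {𝓑 : Finset (Finset P)} {G : Subgroup (Equiv.Perm P)} {q : ℕ} {t : Equiv.Perm P}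
  {A : Finset P}

theorem IsElation.ne_one (hp : IsPlane 𝓑 q) {c : P} (h : IsElation 𝓑 t c A) (hA : A ∈ 𝓑) :
    t ≠ 1 := by
  rintro rfl
  obtain ⟨x, hx⟩ := hp.exists_notMem hA
  exact hx ((h.fixed_iff x).1 rfl)

/-- As the order is even by `IsDihedralPlane.even_order`, every involution with an axis is an
elation. -/
theorem IsDihedralPlane.exists_center (hp : IsDihedralPlane 𝓑 G q) (ht : t ∈ G) (h1 : t ≠ 1)
    (h2 : t * t = 1) (hA : A ∈ 𝓑) (hfix : ∀ x ∈ A, t x = x) : ∃ c, IsElation 𝓑 t c A := by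
  have haut := hp.aut t ht
  have hodd : ¬ Even (q + 1) := by
    rw [Nat.not_even_iff_odd]
    exact hp.even_order.add_one
  -- A fixed point `c` off the axis would, by parity, be accompanied by a second one on each line
  -- through `c`.
  have hoff : ∀ y, t y = y ↔ y ∈ A := by
    refine fun c => ⟨fun hc => ?_, hfix c⟩
    by_contra hcA
    obtain ⟨L, hL, hcL, -⟩ := hp.exists_line_ne c ∅ ∅
    obtain ⟨d, hdA, hdL⟩ := hp.meet A hA L hL
    have hcd : c ≠ d := by rintro rfl; exact hcA hdA
    have hfL := hp.smul_eq_of_fixed haut hcd hc (hfix d hdA) hL hcL hdL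
    have hev := mt (hp.even_card_fixed_iff h2 hL hfL).1 hodd
    have hsub : ({c, d} : Finset P) ⊆ L.filter fun x => t x = x := by
      intro x hx
      rw [Finset.mem_insert, Finset.mem_singleton] at hx
      rcases hx with rfl | rfl
      · exact Finset.mem_filter.2 ⟨hcL, hc⟩
      · exact Finset.mem_filter.2 ⟨hdL, hfix x hdA⟩
    have hne : ({c, d} : Finset P) ≠ L.filter fun x => t x = x := by
      intro h
      rw [← h, Finset.card_pair hcd] at hev
      exact hev even_two
    obtain ⟨e, he, he'⟩ := Finset.exists_of_ssubset (hsub.ssubset_of_ne hne)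
    rw [Finset.mem_filter] at he
    rw [Finset.mem_insert, Finset.mem_singleton, not_or] at he'
    have heA : e ∉ A := fun h =>
      he'.2 (hp.meet_unique hA hL (by rintro rfl; exact hcA hcL) h he.1 hdA hdL)
    exact h1 (hp.eq_one_of_axis haut hA hfix hcA heA (Ne.symm he'.1) hc he.2)
  obtain ⟨X, hX⟩ := hp.exists_notMem hA
  have hX' : t X ≠ X := fun h => hX ((hoff X).1 h)
  obtain ⟨M, hM, hXM, htXM⟩ := hp.join X (t X) hX'.symm
  have hfM := hp.smul_eq_of_swap haut h2 hX' hM hXM htXM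
  obtain ⟨c, hcA, hcM⟩ := hp.meet A hA M hM
  refine ⟨c, h2, hcA, hoff, fun L hL hcL => ?_⟩
  obtain ⟨Y, hYL, hYc, -⟩ := hp.exists_mem_ne hL c c
  by_cases hYA : Y ∈ A
  · exact hp.smul_eq_of_fixed haut hYc (hfix Y hYA) (hfix c hcA) hL hYL hcL
  have hY' : t Y ≠ Y := fun h => hYA ((hoff Y).1 h)
  obtain ⟨N, hN, hYN, htYN⟩ := hp.join Y (t Y) hY'.symm
  have hfN := hp.smul_eq_of_swap haut h2 hY' hN hYN htYN
  have hcN : c ∈ N := by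
    by_cases hMN : M = N
    · rwa [← hMN]
    obtain ⟨d, hdM, hdN⟩ := hp.meet M hM N hN
    have hdA := (hoff d).1 (hp.fixed_of_meet hM hN hMN hfM hfN hdM hdN)
    rwa [hp.meet_unique hA hM (by rintro rfl; exact hX hXM) hcA hcM hdA hdM]
  rwa [hp.join_unique Y c hYc L hL N hN hYL hcL hYN hcN]

omit [Fintype P] in
theorem IsElation.conj {c : P} (h : IsElation 𝓑 t c A) {g : Equiv.Perm P}
    (hg : ∀ B ∈ 𝓑, g⁻¹ • B ∈ 𝓑) : IsElation 𝓑 (g * t * g⁻¹) (g c) (g • A) where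
  sq := by
    have : g * t * g⁻¹ * (g * t * g⁻¹) = g * (t * t) * g⁻¹ := by group
    rw [this, h.sq]; group
  center_mem := (apply_mem_smul_iff g A c).2 h.center_mem
  fixed_iff y := by
    obtain ⟨z, rfl⟩ := g.surjective y
    rw [apply_mem_smul_iff, ← h.fixed_iff z]
    simp
  line L hL hc := by
    have h1 : c ∈ g⁻¹ • L := by
      rw [← apply_mem_smul_iff g, smul_inv_smul]
      exact hc
    rw [mul_smul, mul_smul, h.line _ (hg L hL) h1, smul_inv_smul]

theorem IsDihedralPlane.exists_elation (hp : IsDihedralPlane 𝓑 G q) (hA : A ∈ 𝓑) {c : P}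
    (hc : c ∈ A) : ∃ t ∈ G, IsElation 𝓑 t c A := by
  obtain ⟨t, ht, h1, h2⟩ := hp.involution
  obtain ⟨A', hA', hfix⟩ := hp.exists_axis (hp.aut t ht) h1 h2 fun B hB => hp.three B hB t ht
  obtain ⟨c', h⟩ := hp.exists_center ht h1 h2 hA' hfix
  obtain ⟨g, hg, rfl, rfl⟩ := hp.flag A' hA' A hA c' h.center_mem c hc
  exact ⟨g * t * g⁻¹, G.mul_mem (G.mul_mem hg ht) (G.inv_mem hg),
    h.conj (hp.aut _ (G.inv_mem hg))⟩

/-- Two elations with the same center `c` and axis induce the unique nontrivial permutation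
fixing `c` on every other line through `c`. -/
theorem IsDihedralPlane.elation_unique (hp : IsDihedralPlane 𝓑 G q) (hA : A ∈ 𝓑) {c : P}
    {s : Equiv.Perm P} (hs : s ∈ G) (ht : t ∈ G) (hsE : IsElation 𝓑 s c A)
    (htE : IsElation 𝓑 t c A) : s = t := by
  have hagree : ∀ L ∈ 𝓑, c ∈ L → L ≠ A → ∀ y ∈ L, s y = t y := by
    intro L hL hcL hLA
    have hmove : ∃ y ∈ L, y ∉ A := by
      obtain ⟨y, hy, hyc, -⟩ := hp.exists_mem_ne hL c c
      exact ⟨y, hy, fun hyA => hyc (hp.meet_unique hL hA hLA hy hyA hcL hsE.center_mem)⟩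
    obtain ⟨y, hy, hyA⟩ := hmove
    exact hp.agree L hL s hs t ht (hsE.line L hL hcL) (htE.line L hL hcL) c hcL
      ((hsE.fixed_iff c).2 hsE.center_mem) ((htE.fixed_iff c).2 hsE.center_mem)
      ⟨y, hy, fun h => hyA ((hsE.fixed_iff y).1 h)⟩ ⟨y, hy, fun h => hyA ((htE.fixed_iff y).1 h)⟩
  ext y
  by_cases hyc : y = c
  · subst hyc
    rw [(hsE.fixed_iff y).2 hsE.center_mem, (htE.fixed_iff y).2 hsE.center_mem]
  obtain ⟨L, hL, hyL, hcL⟩ := hp.join y c hyc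
  by_cases hLA : L = A
  · rw [(hsE.fixed_iff y).2 (hLA ▸ hyL), (htE.fixed_iff y).2 (hLA ▸ hyL)]
  · exact hagree L hL hcL hLA y hyL

theorem IsPlane.center_unique (hp : IsPlane 𝓑 q) {c c' : P} (h : IsElation 𝓑 t c A)
    (h' : IsElation 𝓑 t c' A) (hA : A ∈ 𝓑) : c = c' := by
  by_contra hcc
  obtain ⟨x, hx⟩ := hp.exists_notMem hA
  obtain ⟨L, hL, hxL, hcL⟩ := hp.join x c (by rintro rfl; exact hx h.center_mem)
  obtain ⟨L', hL', hxL', hcL'⟩ := hp.join x c' (by rintro rfl; exact hx h'.center_mem)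
  refine hx ((h.fixed_iff x).1 (hp.fixed_of_meet hL hL' ?_ (h.line L hL hcL)
    (h'.line L' hL' hcL') hxL hxL'))
  rintro rfl
  exact hx (hp.join_unique c c' hcc L hL A hA hcL hcL' h.center_mem h'.center_mem ▸ hxL)

theorem IsPlane.smul_eq_of_pointwise {g : Equiv.Perm P} (hp : IsPlane 𝓑 q)
    (hg : ∀ B ∈ 𝓑, g • B ∈ 𝓑) (hA : A ∈ 𝓑) (hfix : ∀ x ∈ A, g x = x) : g • A = A := by
  obtain ⟨x, hx, -⟩ := hp.meet A hA A hA
  obtain ⟨y, hy, hyx, -⟩ := hp.exists_mem_ne hA x x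
  exact hp.smul_eq_of_fixed hg hyx (hfix y hy) (hfix x hx) hA hy hx

/-- For a fixed axis `A` of a plane of even order there is exactly one elation for each of the
`q + 1` centers. Together with the identity they form an elementary abelian group of order `q + 2`
acting freely on the `q ^ 2` points off `A`, so `q + 2` divides `q ^ 2`. -/
theorem IsDihedralPlane.order_eq_two (hp : IsDihedralPlane 𝓑 G q) : q = 2 := by
  obtain ⟨A, hA⟩ : ∃ A, A ∈ 𝓑 := by
    obtain ⟨t, -, h1, -⟩ := hp.involution
    obtain ⟨x, -⟩ : ∃ x, t x ≠ x := by
      by_contra! h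
      exact h1 (Equiv.ext h)
    obtain ⟨L, hL, -⟩ := hp.exists_line_ne x ∅ ∅
    exact ⟨L, hL⟩
  have hcent : ∀ g ∈ G, g ≠ 1 → g * g = 1 → (∀ x ∈ A, g x = x) → ∃ c, IsElation 𝓑 g c A :=
    fun g hg h1 h2 hfix => hp.exists_center hg h1 h2 hA hfix
  -- A conjugate of an elation by an element fixing `A` pointwise has the same center and axis.
  have hcomm : ∀ g ∈ G, ∀ h ∈ G, g * g = 1 → (∀ x ∈ A, g x = x) → (∀ x ∈ A, h x = x) →
      h * g = g * h := by
    intro g hg h hh hg2 hgfix hhfix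
    by_cases hg1 : g = 1
    · rw [hg1, mul_one, one_mul]
    obtain ⟨c, hc⟩ := hcent g hg hg1 hg2 hgfix
    have h1 := hc.conj (g := h) (hp.aut _ (G.inv_mem hh))
    rw [hhfix c hc.center_mem, hp.smul_eq_of_pointwise (hp.aut h hh) hA hhfix] at h1
    have := hp.elation_unique hA (G.mul_mem (G.mul_mem hh hg) (G.inv_mem hh)) hg h1 hc
    rwa [mul_inv_eq_iff_eq_mul] at this
  let E : Subgroup (Equiv.Perm P) :=
    { carrier := {g | g ∈ G ∧ g * g = 1 ∧ ∀ x ∈ A, g x = x}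
      one_mem' := ⟨G.one_mem, one_mul 1, fun _ _ => rfl⟩
      mul_mem' := by
        rintro g h ⟨hg, hg2, hgf⟩ ⟨hh, hh2, hhf⟩
        refine ⟨G.mul_mem hg hh, ?_, fun x hx => ?_⟩
        · calc g * h * (g * h) = g * (h * g) * h := by group
            _ = g * g * (h * h) := by rw [hcomm g hg h hh hg2 hgf hhf]; group
            _ = 1 := by rw [hg2, hh2, one_mul]
        · rw [Equiv.Perm.mul_apply, hhf x hx, hgf x hx]
      inv_mem' := by
        rintro g ⟨hg, hg2, hgf⟩
        rw [inv_eq_of_mul_eq_one_left hg2]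
        exact ⟨hg, hg2, hgf⟩ }
  have hEcard : Nat.card E = q + 2 := by
    choose τ hτG hτ using fun c : A => hp.exists_elation hA c.2
    let f : Option A → E := fun o => o.elim 1 fun c =>
      ⟨τ c, hτG c, (hτ c).sq, fun x hx => ((hτ c).fixed_iff x).2 hx⟩
    have hf : Function.Bijective f := by
      constructor
      · rintro (_ | c) (_ | d) h
        · rfl
        · exact absurd (congrArg Subtype.val h).symm ((hτ d).ne_one hp.toIsPlane hA)
        · exact absurd (congrArg Subtype.val h) ((hτ c).ne_one hp.toIsPlane hA)
        · have h1 : τ c = τ d := congrArg Subtype.val h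
          have h2 := hτ c
          rw [h1] at h2
          rw [Subtype.ext (hp.center_unique h2 (hτ d) hA)]
      · rintro ⟨g, hg, hg2, hgf⟩
        by_cases hg1 : g = 1
        · exact ⟨none, Subtype.ext hg1.symm⟩
        · obtain ⟨c, hc⟩ := hcent g hg hg1 hg2 hgf
          refine ⟨some ⟨c, hc.center_mem⟩, Subtype.ext ?_⟩
          exact hp.elation_unique hA (hτG _) hg (hτ ⟨c, hc.center_mem⟩) hc
    rw [← Nat.card_congr (Equiv.ofBijective f hf), Nat.card_eq_fintype_card, Fintype.card_option,
      Fintype.card_coe, hp.card_line A hA]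
  let Y : SubMulAction E P :=
    { carrier := {x | x ∉ A}
      smul_mem' := by
        rintro ⟨g, hg, hg2, hgf⟩ x hx hgx
        have : g (g x) = g x := hgf (g x) hgx
        exact hx (by rw [← g.injective this]; exact hgx) }
  have hYcard : Nat.card Y = q ^ 2 := by
    have h1 : Nat.card Y = Nat.card {x // x ∉ A} := rfl
    rw [h1, Nat.card_eq_fintype_card, Fintype.card_subtype_compl, hp.card_points,
      Fintype.card_coe, hp.card_line A hA]
    omega
  have hdvd := card_dvd_card_of_free E Y (by
    rintro ⟨g, hg, hg2, hgf⟩ ⟨x, hx⟩ h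
    have hgx : g x = x := congrArg Subtype.val h
    by_contra hne
    obtain ⟨c, hc⟩ := hcent g hg (fun h => hne (Subtype.ext h)) hg2 hgf
    exact hx ((hc.fixed_iff x).1 hgx))
  rw [hEcard, hYcard] at hdvd
  have h2 := hp.two_le
  have h4 : q + 2 ∣ 4 := by
    obtain ⟨m, rfl⟩ := Nat.exists_eq_add_of_le' h2
    have : (m + 2) ^ 2 = 4 + m * (m + 2 + 2) := by ring
    rw [this] at hdvd
    exact (Nat.dvd_add_left (Dvd.intro_left m rfl)).1 hdvd
  have := Nat.le_of_dvd (by norm_num) h4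
  omega

end DihedralPlane

/-! ### The plane of order two -/

/-- The restriction of the setwise stabilizer of `B` to an invariant set of points. -/
def stabilizerRestrict (G : Subgroup (Equiv.Perm P)) (B : Finset P) (p : P → Prop)
    (h : ∀ g : MulAction.stabilizer G B, ∀ x, p (((g : G) : Equiv.Perm P) x) ↔ p x) :
    MulAction.stabilizer G B →* Equiv.Perm {x // p x} where
  toFun g := Equiv.Perm.subtypePerm ((g : G) : Equiv.Perm P) (h g)
  map_one' := rfl
  map_mul' _ _ := rfl

theorem specialLinearGroup_bijective_toGL :
    Function.Bijective (Matrix.SpecialLinearGroup.toGL (n := Fin 3) (R := ZMod 2)) := by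
  refine ⟨Matrix.SpecialLinearGroup.toGL_injective, fun g => ?_⟩
  have h : (g : Matrix (Fin 3) (Fin 3) (ZMod 2)).det = 1 := by
    have h1 : IsUnit (g : Matrix (Fin 3) (Fin 3) (ZMod 2)).det :=
      (Matrix.isUnit_iff_isUnit_det _).1 g.isUnit
    have h2 : ∀ a : ZMod 2, a ≠ 0 → a = 1 := by decide
    exact h2 _ h1.ne_zero
  exact ⟨⟨g, h⟩, Units.ext rfl⟩

theorem center_specialLinearGroup_eq_bot :
    Subgroup.center (Matrix.SpecialLinearGroup (Fin 3) (ZMod 2)) = ⊥ := by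
  rw [eq_bot_iff]
  intro M hM
  obtain ⟨r, hr, hrM⟩ := Matrix.SpecialLinearGroup.mem_center_iff.1 hM
  have h2 : ∀ a : ZMod 2, a ^ 3 = 1 → a = 1 := by decide
  rw [Fintype.card_fin] at hr
  rw [h2 r hr, map_one] at hrM
  exact Subgroup.mem_bot.2 (Subtype.ext hrM.symm)

theorem nonempty_GL_equiv_PSL32 : Nonempty (GL (Fin 3) (ZMod 2) ≃* PSL32) :=
  ⟨(MulEquiv.ofBijective _ specialLinearGroup_bijective_toGL).symm.trans
    ((QuotientGroup.quotientMulEquivOfEq center_specialLinearGroup_eq_bot).trans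
      QuotientGroup.quotientBot).symm⟩

section Fano

variable {𝓑 : Finset (Finset P)} {G : Subgroup (Equiv.Perm P)} {B : Finset P}

theorem IsPlane.mem_line_cases (hp : IsPlane 𝓑 2) {L : Finset P} (hL : L ∈ 𝓑) {a b c x : P}
    (ha : a ∈ L) (hb : b ∈ L) (hc : c ∈ L) (hab : a ≠ b) (hac : a ≠ c) (hbc : b ≠ c)
    (hx : x ∈ L) : x = a ∨ x = b ∨ x = c := by
  have h1 : ({a, b, c} : Finset P) = L := by
    apply Finset.eq_of_subset_of_card_le
    · simp [Finset.insert_subset_iff, ha, hb, hc]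
    · rw [hp.card_line L hL, Finset.card_eq_three.2 ⟨a, b, c, hab, hac, hbc, rfl⟩]
  rw [← h1] at hx
  simpa using hx

theorem IsPlane.pencil_cases (hp : IsPlane 𝓑 2) {c : P} {L M N K : Finset P} (hL : L ∈ 𝓑)
    (hM : M ∈ 𝓑) (hN : N ∈ 𝓑) (hK : K ∈ 𝓑) (hcL : c ∈ L) (hcM : c ∈ M) (hcN : c ∈ N)
    (hcK : c ∈ K) (hLM : L ≠ M) (hLN : L ≠ N) (hMN : M ≠ N) : K = L ∨ K = M ∨ K = N := by
  have h1 : ({L, M, N} : Finset (Finset P)) = 𝓑.filter fun B => c ∈ B := by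
    apply Finset.eq_of_subset_of_card_le
    · simp [Finset.insert_subset_iff, *]
    · rw [hp.card_pencil, Finset.card_eq_three.2 ⟨L, M, N, hLM, hLN, hMN, rfl⟩]
  have h2 : K ∈ 𝓑.filter fun B => c ∈ B := Finset.mem_filter.2 ⟨hK, hcK⟩
  rw [← h1] at h2
  simpa using h2

theorem IsPlane.exists_mem_three_lines (hp : IsPlane 𝓑 2) {c : P} {L M N : Finset P} (hL : L ∈ 𝓑)
    (hM : M ∈ 𝓑) (hN : N ∈ 𝓑) (hcL : c ∈ L) (hcM : c ∈ M) (hcN : c ∈ N)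
    (hLM : L ≠ M) (hLN : L ≠ N) (hMN : M ≠ N) (x : P) : x ∈ L ∨ x ∈ M ∨ x ∈ N := by
  by_cases hxc : x = c
  · exact Or.inl (hxc ▸ hcL)
  obtain ⟨K, hK, hxK, hcK⟩ := hp.join x c hxc
  rcases hp.pencil_cases hL hM hN hK hcL hcM hcN hcK hLM hLN hMN with rfl | rfl | rfl
  · exact Or.inl hxK
  · exact Or.inr (Or.inl hxK)
  · exact Or.inr (Or.inr hxK)

/-- In the plane of order two, a collineation fixing the four points off a line is trivial. -/
theorem IsPlane.eq_one_of_affine (hp : IsPlane 𝓑 2) {t : Equiv.Perm P}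
    (ht : ∀ B ∈ 𝓑, t • B ∈ 𝓑) (hB : B ∈ 𝓑) (hfix : ∀ x, x ∉ B → t x = x) : t = 1 := by
  have hline : ∀ L ∈ 𝓑, L ≠ B → t • L = L := by
    intro L hL hLB
    obtain ⟨c, hcL, hcB⟩ := hp.meet L hL B hB
    obtain ⟨x, hx, hxc, -⟩ := hp.exists_mem_ne hL c c
    obtain ⟨y, hy, hyc, hyx⟩ := hp.exists_mem_ne hL c x
    exact hp.smul_eq_of_fixed ht hyx
      (hfix y fun h => hyc (hp.meet_unique hL hB hLB hy h hcL hcB))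
      (hfix x fun h => hxc (hp.meet_unique hL hB hLB hx h hcL hcB)) hL hy hx
  ext x
  obtain ⟨L, hL, hxL, hLB, -⟩ := hp.exists_line_ne x B B
  obtain ⟨M, hM, hxM, hMB, hML⟩ := hp.exists_line_ne x B L
  exact hp.fixed_of_meet hL hM hML.symm (hline L hL hLB) (hline M hM hMB) hxL hxM

/-- The stabilizer of a line `B` acts faithfully on the four points off `B`, and elations with
center on `B` induce every transposition of these points. -/
theorem IsDihedralPlane.stabilizer_equiv (hp : IsDihedralPlane 𝓑 G 2) (hB : B ∈ 𝓑) :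
    Nonempty (MulAction.stabilizer G B ≃* Equiv.Perm (Fin 4)) := by
  have hinv : ∀ g : MulAction.stabilizer G B, ∀ x, ((g : G) : Equiv.Perm P) x ∉ B ↔ x ∉ B := by
    intro g x
    have h : ((g : G) : Equiv.Perm P) • B = B := g.2
    have h1 := apply_mem_smul_iff ((g : G) : Equiv.Perm P) B x
    rw [h] at h1
    exact not_congr h1
  let ρ := stabilizerRestrict G B (· ∉ B) hinv
  have hinj : Function.Injective ρ := by
    rw [injective_iff_map_eq_one]
    intro g hg
    have : ((g : G) : Equiv.Perm P) = 1 :=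
      hp.eq_one_of_affine (hp.aut _ (g : G).2) hB fun x hx =>
        congrArg Subtype.val (DFunLike.congr_fun hg (⟨x, hx⟩ : {x // x ∉ B}))
    exact Subtype.ext (Subtype.ext this)
  have hsurj : Function.Surjective ρ := by
    rw [← MonoidHom.range_eq_top, eq_top_iff, ← Equiv.Perm.closure_isSwap,
      Subgroup.closure_le]
    rintro _ ⟨⟨X, hX⟩, ⟨Y, hY⟩, hne, rfl⟩
    have hXY : X ≠ Y := fun h => hne (Subtype.ext h)
    obtain ⟨N, hN, hXN, hYN⟩ := hp.join X Y hXY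
    obtain ⟨c, hcN, hcB⟩ := hp.meet N hN B hB
    have hNB : N ≠ B := by rintro rfl; exact hX hXN
    obtain ⟨M, hM, hcM, hMB, hMN⟩ := hp.exists_line_ne c B N
    obtain ⟨t, ht, hE⟩ := hp.exists_elation hM hcM
    have hcX : c ≠ X := by rintro rfl; exact hX hcB
    have hcY : c ≠ Y := by rintro rfl; exact hY hcB
    have htc : t c = c := (hE.fixed_iff c).2 hcM
    have hswap : ∀ X Y, c ≠ X → X ∈ N → c ≠ Y → Y ∈ N → X ≠ Y → t X = Y := by
      intro X Y hcX hXN hcY hYN hXY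
      rcases hp.mem_line_cases hN hcN hXN hYN hcX hcY hXY
        (apply_mem_of_smul_eq (hE.line N hN hcN) hXN) with h | h | h
      · exact absurd (t.injective (h.trans htc.symm)) hcX.symm
      · exact absurd (hp.meet_unique hM hN hMN ((hE.fixed_iff X).1 h) hXN hcM hcN) hcX.symm
      · exact h
    refine ⟨⟨⟨t, ht⟩, hE.line B hB hcB⟩, ?_⟩
    ext ⟨W, hW⟩
    change t W = _
    by_cases hWX : W = X
    · subst hWX
      rw [Equiv.swap_apply_left]
      exact hswap W Y hcX hXN hcY hYN hXY
    by_cases hWY : W = Y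
    · subst hWY
      rw [Equiv.swap_apply_right]
      exact hswap W X hcY hYN hcX hXN hXY.symm
    rw [Equiv.swap_apply_of_ne_of_ne (fun h => hWX (congrArg Subtype.val h))
      (fun h => hWY (congrArg Subtype.val h))]
    rcases hp.exists_mem_three_lines hB hN hM hcB hcN hcM hNB.symm hMB.symm hMN.symm W with
      h | h | h
    · exact absurd h hW
    · rcases hp.mem_line_cases hN hcN hXN hYN hcX hcY hXY h with rfl | rfl | rfl
      · exact absurd hcB hW
      · exact absurd rfl hWX
      · exact absurd rfl hWY
    · exact (hE.fixed_iff W).2 h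
  have hcard : Fintype.card {x // x ∉ B} = Fintype.card (Fin 4) := by
    rw [Fintype.card_subtype_compl, hp.card_points, Fintype.card_coe, hp.card_line B hB,
      Fintype.card_fin]
    rfl
  exact ⟨(MulEquiv.ofBijective ρ ⟨hinj, hsurj⟩).trans
    (Equiv.permCongrHom (Fintype.equivOfCardEq hcard))⟩

/-- The indicator function of the complement of a line, over the field with two elements. -/
def complIndicator (B : Finset P) : P → ZMod 2 := fun x => if x ∈ B then 0 else 1

omit [Fintype P] in
theorem complIndicator_injective : Function.Injective (complIndicator (P := P)) := by
  intro B B' h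
  ext x
  have := congrFun h x
  unfold complIndicator at this
  by_cases h1 : x ∈ B <;> by_cases h2 : x ∈ B' <;> simp_all

/-- The simplex code of the plane of order two: the zero word and the complements of the seven
lines. It is closed under addition because the symmetric difference of two lines is the complement
of the third line through their common point. -/
def IsPlane.code (hp : IsPlane 𝓑 2) : Submodule (ZMod 2) (P → ZMod 2) where
  carrier := {f | f = 0 ∨ ∃ B ∈ 𝓑, f = complIndicator B}
  zero_mem' := Or.inl rfl
  add_mem' := by
    rintro f g (rfl | ⟨B, hB, rfl⟩) (rfl | ⟨C, hC, rfl⟩)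
    · exact Or.inl (add_zero 0)
    · exact Or.inr ⟨C, hC, zero_add _⟩
    · exact Or.inr ⟨B, hB, add_zero _⟩
    · by_cases hBC : B = C
      · subst hBC
        exact Or.inl (funext fun x => CharTwo.add_self_eq_zero _)
      obtain ⟨c, hcB, hcC⟩ := hp.meet B hB C hC
      obtain ⟨D, hD, hcD, hDB, hDC⟩ := hp.exists_line_ne c B C
      refine Or.inr ⟨D, hD, funext fun x => ?_⟩
      rw [Pi.add_apply]
      unfold complIndicator
      have h0 := hp.exists_mem_three_lines hB hC hD hcB hcC hcD hBC hDB.symm hDC.symm x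
      have h1 : x ∈ B → x ∈ C → x ∈ D := fun h h' => by
        rwa [hp.meet_unique hB hC hBC h h' hcB hcC]
      have h2 : x ∈ B → x ∈ D → x ∈ C := fun h h' => by
        rwa [hp.meet_unique hB hD hDB.symm h h' hcB hcD]
      have h3 : x ∈ C → x ∈ D → x ∈ B := fun h h' => by
        rwa [hp.meet_unique hC hD hDC.symm h h' hcC hcD]
      by_cases hB : x ∈ B <;> by_cases hC : x ∈ C <;> by_cases hD : x ∈ D <;>
        first
        | (exfalso; tauto)
        | (simp only [hB, hC, hD, if_true, if_false]; rfl)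
  smul_mem' := by
    intro a f hf
    have h : a = 0 ∨ a = 1 := by
      revert a
      decide
    rcases h with rfl | rfl
    · exact Or.inl (zero_smul _ f)
    · rwa [one_smul]

theorem IsPlane.card_lines (hp : IsPlane 𝓑 2) : 𝓑.card = 7 := by
  have h := Finset.sum_card_bipartiteAbove_eq_sum_card_bipartiteBelow (s := Finset.univ) (t := 𝓑)
    (fun (x : P) (B : Finset P) => x ∈ B)
  have h1 : ∀ x : P, (Finset.bipartiteAbove (fun (x : P) (B : Finset P) => x ∈ B) 𝓑 x).card = 3 :=
    fun x => hp.card_pencil x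
  have h2 : ∀ B ∈ 𝓑, (Finset.bipartiteBelow (fun (x : P) (B : Finset P) => x ∈ B)
      Finset.univ B).card = 3 := by
    intro B hB
    unfold Finset.bipartiteBelow
    rw [Finset.filter_univ_mem, hp.card_line B hB]
  rw [Finset.sum_congr rfl fun x _ => h1 x, Finset.sum_congr rfl h2, Finset.sum_const,
    Finset.sum_const, Finset.card_univ, hp.card_points] at h
  simp only [smul_eq_mul] at h
  omega

theorem IsPlane.finrank_code (hp : IsPlane 𝓑 2) : Module.finrank (ZMod 2) hp.code = 3 := by
  classical
  let f : Option 𝓑 → hp.code := fun o => o.elim 0 fun B =>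
    ⟨complIndicator B.1, Or.inr ⟨B.1, B.2, rfl⟩⟩
  have hne : ∀ B ∈ 𝓑, complIndicator B ≠ 0 := by
    intro B hB h
    obtain ⟨x, hx⟩ := hp.exists_notMem hB
    have := congrFun h x
    simp [complIndicator, hx] at this
  have hf : Function.Bijective f := by
    constructor
    · rintro (_ | B) (_ | C) h
      · rfl
      · exact absurd (congrArg Subtype.val h).symm (hne C.1 C.2)
      · exact absurd (congrArg Subtype.val h) (hne B.1 B.2)
      · exact congrArg some (Subtype.ext (complIndicator_injective (congrArg Subtype.val h)))
    · rintro ⟨g, rfl | ⟨B, hB, rfl⟩⟩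
      · exact ⟨none, rfl⟩
      · exact ⟨some ⟨B, hB⟩, rfl⟩
  have hcard := Fintype.card_congr (Equiv.ofBijective f hf)
  rw [Fintype.card_option, Fintype.card_coe, hp.card_lines,
    Module.card_eq_pow_finrank (K := ZMod 2), ZMod.card] at hcard
  exact (Nat.pow_right_injective le_rfl hcard.symm : _ = 3)

theorem IsDihedralPlane.comp_inv_mem_code (hp : IsDihedralPlane 𝓑 G 2) (g : G) :
    ∀ f ∈ hp.code, LinearMap.funLeft (ZMod 2) (ZMod 2) ((g : Equiv.Perm P)⁻¹ : Equiv.Perm P) f ∈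
      hp.code := by
  rintro _ (rfl | ⟨B, hB, rfl⟩)
  · exact Or.inl (map_zero _)
  · refine Or.inr ⟨(g : Equiv.Perm P) • B, hp.aut g g.2 B hB, funext fun x => ?_⟩
    change complIndicator B (((g : Equiv.Perm P)⁻¹ : Equiv.Perm P) x) = _
    exact if_congr (Finset.inv_smul_mem_iff (a := (g : Equiv.Perm P)) (b := x)) rfl rfl

/-- The linear action of the collineation group on the code. -/
noncomputable def IsDihedralPlane.codeRep (hp : IsDihedralPlane 𝓑 G 2) :
    G →* (hp.code →ₗ[ZMod 2] hp.code) where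
  toFun g := (LinearMap.funLeft (ZMod 2) (ZMod 2)
    ((g : Equiv.Perm P)⁻¹ : Equiv.Perm P)).restrict (hp.comp_inv_mem_code g)
  map_one' := by ext; rfl
  map_mul' g h := by
    ext f x
    change f.1 (((g * h : G) : Equiv.Perm P)⁻¹ x) = f.1 (_)
    rw [Subgroup.coe_mul, mul_inv_rev]
    rfl

theorem IsDihedralPlane.codeRep_injective (hp : IsDihedralPlane 𝓑 G 2) :
    Function.Injective hp.codeRep := by
  rw [injective_iff_map_eq_one]
  intro g hg
  have hline : ∀ L ∈ 𝓑, (g : Equiv.Perm P) • L = L := by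
    intro L hL
    apply complIndicator_injective
    have h := congrArg Subtype.val
      (LinearMap.congr_fun hg ⟨complIndicator L, Or.inr ⟨L, hL, rfl⟩⟩)
    refine Eq.trans (funext fun x => ?_) h
    change _ = complIndicator L (((g : Equiv.Perm P)⁻¹ : Equiv.Perm P) x)
    exact if_congr Finset.inv_smul_mem_iff.symm rfl rfl
  refine Subtype.ext (Equiv.ext fun x => ?_)
  obtain ⟨L, hL, hxL, -⟩ := hp.exists_line_ne x ∅ ∅
  obtain ⟨M, hM, hxM, hML, -⟩ := hp.exists_line_ne x L L
  exact hp.fixed_of_meet hL hM hML.symm (hline L hL) (hline M hM) hxL hxM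

theorem IsDihedralPlane.card_group (hp : IsDihedralPlane 𝓑 G 2) (hB : B ∈ 𝓑) :
    Nat.card G = 168 := by
  obtain ⟨e⟩ := hp.stabilizer_equiv hB
  have h1 : Nat.card (MulAction.stabilizer G B) = 24 := by
    rw [Nat.card_congr e.toEquiv, Nat.card_eq_fintype_card, Fintype.card_perm, Fintype.card_fin]
    rfl
  have h2 : MulAction.orbit G B = (𝓑 : Set (Finset P)) := by
    ext C
    constructor
    · rintro ⟨g, rfl⟩
      exact hp.aut g g.2 B hB
    · intro hC
      obtain ⟨x, hx, -⟩ := hp.meet B hB B hB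
      obtain ⟨y, hy, -⟩ := hp.meet C hC C hC
      obtain ⟨g, hg, -, h⟩ := hp.flag B hB C hC x hx y hy
      exact ⟨⟨g, hg⟩, h⟩
  have h3 := (MulAction.stabilizer G B).card_mul_index
  rw [h1, MulAction.index_stabilizer, h2, Set.ncard_coe_finset, hp.card_lines] at h3
  exact h3.symm

theorem IsDihedralPlane.equiv_PSL32 (hp : IsDihedralPlane 𝓑 G 2) (hB : B ∈ 𝓑) :
    Nonempty (G ≃* PSL32) := by
  let b := Module.finBasisOfFinrankEq (ZMod 2) hp.code hp.finrank_code
  let ρ : G →* Matrix (Fin 3) (Fin 3) (ZMod 2) :=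
    ((LinearMap.toMatrixAlgEquiv b : _ ≃ₐ[ZMod 2] _) : _ →* _).comp hp.codeRep
  have hρ : Function.Injective ρ :=
    (LinearMap.toMatrixAlgEquiv b).injective.comp hp.codeRep_injective
  let σ : G →* GL (Fin 3) (ZMod 2) := ρ.toHomUnits
  have hσ : Function.Injective σ := fun g h hgh => hρ (congrArg Units.val hgh)
  have hcard : Nat.card (GL (Fin 3) (ZMod 2)) = 168 := by
    rw [Matrix.card_GL_field, Fin.prod_univ_three, ZMod.card]
    rfl
  have hbij : Function.Bijective σ :=
    hσ.bijective_of_nat_card_le (by rw [hcard, hp.card_group hB])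
  obtain ⟨e⟩ := nonempty_GL_equiv_PSL32
  exact ⟨(MulEquiv.ofBijective σ hbij).trans e⟩

end Fano

/-! ### Dihedral groups on a line -/

section Assembly

variable {𝓑 : Finset (Finset P)} {G : Subgroup (Equiv.Perm P)} {B : Finset P} {q n : ℕ}

omit [Fintype P] in
theorem conj_smul_eq {g h : Equiv.Perm P} {C : Finset P} (hh : h • B = C) (hg : g • C = C) :
    (h⁻¹ * g * h) • B = B := by
  rw [mul_smul, mul_smul, hh, hg, ← hh, inv_smul_smul]

/-- A flag-transitive collineation group of even order that induces on one line a quotient of a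
dihedral group satisfies the hypotheses of the preceding sections: both features of the action on
that line carry over to every other line by conjugation. -/
theorem isDihedralPlane_of_induced [NeZero n] (hp : IsPlane 𝓑 q)
    (haut : ∀ g ∈ G, ∀ B ∈ 𝓑, g • B ∈ 𝓑) (hflag : IsFlagTransitive G 𝓑) (hB : B ∈ 𝓑)
    (hG : 2 ∣ Nat.card G) (ψ : DihedralGroup n →* Equiv.Perm B)
    (hψ : ∀ g ∈ G, g • B = B → ∃ d, ∀ a : B, (ψ d a : P) = g a) :
    IsDihedralPlane 𝓑 G q := by
  have htr : ∀ x y, ∃ d, ψ d x = y := by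
    rintro ⟨x, hx⟩ ⟨y, hy⟩
    obtain ⟨g, hg, hgx, hgB⟩ := hflag B hB B hB x hx y hy
    obtain ⟨d, hd⟩ := hψ g hg hgB
    exact ⟨d, Subtype.ext ((hd _).trans hgx)⟩
  have hconj : ∀ C ∈ 𝓑, ∃ h ∈ G, h • B = C := by
    intro C hC
    obtain ⟨x, hx, -⟩ := hp.meet B hB B hB
    obtain ⟨y, hy, -⟩ := hp.meet C hC C hC
    obtain ⟨h, hh, -, hBC⟩ := hflag B hB C hC x hx y hy
    exact ⟨h, hh, hBC⟩
  -- On each line `C`, transported to `B` by `h⁻¹`, an element of the stabilizer acts as some `ψ d`.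
  have hact : ∀ h ∈ G, ∀ C, h • B = C → ∀ g ∈ G, g • C = C →
      ∃ d, ∀ a : B, h (ψ d a) = g (h a) := by
    intro h hh C hC g hg hgC
    obtain ⟨d, hd⟩ := hψ (h⁻¹ * g * h) (G.mul_mem (G.mul_mem (G.inv_mem hh) hg) hh)
      (conj_smul_eq hC hgC)
    refine ⟨d, fun a => ?_⟩
    rw [hd a]
    exact h.apply_symm_apply _
  have hpre : ∀ h : Equiv.Perm P, ∀ C, h • B = C → ∀ x ∈ C, ∃ a : B, h a = x := by
    rintro h _ rfl x hx
    obtain ⟨a, ha, rfl⟩ := Finset.mem_smul_finset.1 hx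
    exact ⟨⟨a, ha⟩, rfl⟩
  refine ⟨hp, haut, hflag, ?_, ?_, ?_⟩
  · intro C hC g hg g' hg' hgC hgC' x hx hgx hgx' hne hne' y hy
    obtain ⟨h, hh, hBC⟩ := hconj C hC
    obtain ⟨d, hd⟩ := hact h hh C hBC g hg hgC
    obtain ⟨e, he⟩ := hact h hh C hBC g' hg' hgC'
    obtain ⟨x, rfl⟩ := hpre h C hBC x hx
    obtain ⟨y, rfl⟩ := hpre h C hBC y hy
    have hd1 : ψ d ≠ 1 := by
      intro h1
      obtain ⟨z, hz, hgz⟩ := hne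
      obtain ⟨z, rfl⟩ := hpre h C hBC z hz
      exact hgz (by rw [← hd, h1, Equiv.Perm.one_apply])
    have he1 : ψ e ≠ 1 := by
      intro h1
      obtain ⟨z, hz, hgz⟩ := hne'
      obtain ⟨z, rfl⟩ := hpre h C hBC z hz
      exact hgz (by rw [← he, h1, Equiv.Perm.one_apply])
    have h1 : ψ d = ψ e := dihedral_stabilizer_unique ψ htr
      (Subtype.ext (h.injective ((hd x).trans hgx)))
      (Subtype.ext (h.injective ((he x).trans hgx'))) hd1 he1
    rw [← hd, ← he, h1]
  · intro C hC g hg hgC x hx y hy z hz hxy hxz hyz hgx hgy hgz w hw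
    obtain ⟨h, hh, hBC⟩ := hconj C hC
    obtain ⟨d, hd⟩ := hact h hh C hBC g hg hgC
    obtain ⟨x, rfl⟩ := hpre h C hBC x hx
    obtain ⟨y, rfl⟩ := hpre h C hBC y hy
    obtain ⟨z, rfl⟩ := hpre h C hBC z hz
    obtain ⟨w, rfl⟩ := hpre h C hBC w hw
    have h1 : ψ d = 1 := dihedral_eq_one_of_three_fixed ψ htr
      (Subtype.ext (h.injective ((hd x).trans hgx)))
      (Subtype.ext (h.injective ((hd y).trans hgy)))
      (Subtype.ext (h.injective ((hd z).trans hgz)))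
      (fun e => hxy (by rw [e])) (fun e => hxz (by rw [e])) (fun e => hyz (by rw [e]))
    rw [← hd, h1, Equiv.Perm.one_apply]
  · have : Fact (Nat.Prime 2) := ⟨Nat.prime_two⟩
    obtain ⟨t, ht⟩ := exists_prime_orderOf_dvd_card' (G := G) 2 hG
    obtain ⟨h1, h2⟩ := orderOf_eq_prime_iff.1 ht
    refine ⟨t, t.2, fun h => h2 (Subtype.ext h), ?_⟩
    rw [pow_two] at h1
    exact congrArg Subtype.val h1

set_option maxRecDepth 10000 in
/-- A dihedral group is not isomorphic to the symmetric group of degree four, where every element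
has order dividing three or four. -/
theorem isEmpty_dihedral_equiv_perm_four (hn : 3 ≤ n) :
    IsEmpty (DihedralGroup n ≃* Equiv.Perm (Fin 4)) := by
  refine ⟨fun e => ?_⟩
  have hcard := Nat.card_congr e.toEquiv
  rw [DihedralGroup.nat_card, Nat.card_eq_fintype_card, Fintype.card_perm, Fintype.card_fin] at hcard
  have h12 : n = 12 := by
    change 2 * n = 24 at hcard
    omega
  subst h12
  have hord : orderOf (e (DihedralGroup.r 1)) = 12 := by
    rw [MulEquiv.orderOf_eq, DihedralGroup.orderOf_r_one]
  have hS : ∀ σ : Equiv.Perm (Fin 4), σ ^ 3 = 1 ∨ σ ^ 4 = 1 := by decide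
  rcases hS (e (DihedralGroup.r 1)) with h | h
  · have := orderOf_dvd_of_pow_eq_one h
    rw [hord] at this
    omega
  · have := orderOf_dvd_of_pow_eq_one h
    rw [hord] at this
    omega

omit [Fintype P] in
theorem two_dvd_card_of_stabilizer (h : 2 ∣ Nat.card (MulAction.stabilizer G B)) :
    2 ∣ Nat.card G :=
  h.trans (Subgroup.card_subgroup_dvd_card _)

end Assembly

/-- **Lemma 6.2.** Let `G` be a flag-transitive automorphism group of a symmetric design.
(i) If `G_B^B ≅ D_{2n}` (`n ≥ 3`) and `λ = 1`, then `v = 7`, `k = 3`, `n = 3`,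
`G ≅ PSL₃(2)`, and `G_B` is not faithful on `B` (indeed `G_B ≅ S₄`).
(ii) Consequently, if `G_B ≅ D_{2n}` (`n ≥ 3`), then `λ > 1`. -/
theorem stmt_15 (𝓑 : Finset (Finset P)) (v k lam n : ℕ)
    (hD : IsDesign 𝓑 v k lam) (hsym : 𝓑.card = v)
    (G : Subgroup (Equiv.Perm P)) (hAut : IsAutGroup G 𝓑)
    (hflag : IsFlagTransitive G 𝓑) (hn : 3 ≤ n)
    (B : Finset P) (hB : B ∈ 𝓑) :
    ((lam = 1 ∧
        ∃ φ : MulAction.stabilizer G B →* Equiv.Perm B,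
          (∀ (h : MulAction.stabilizer G B) (a : B), (φ h a : P) = h • (a : P)) ∧
          Nonempty (φ.range ≃* DihedralGroup n)) →
      v = 7 ∧ k = 3 ∧ n = 3 ∧ Nonempty (G ≃* PSL32) ∧
        ¬ (∀ g : G, g • B = B → (∀ a ∈ B, g • a = a) → g = 1) ∧
        Nonempty (MulAction.stabilizer G B ≃* Equiv.Perm (Fin 4))) ∧
    (Nonempty (MulAction.stabilizer G B ≃* DihedralGroup n) → 1 < lam) := by
  have hne : NeZero n := ⟨by omega⟩
  constructor
  · rintro ⟨rfl, φ, hφ, ⟨e⟩⟩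
    obtain ⟨q, hk, hv, hp⟩ := hD.isPlane hsym
    have hrange : Nat.card φ.range = 2 * n := by
      rw [Nat.card_congr e.toEquiv, DihedralGroup.nat_card]
    have hG : 2 ∣ Nat.card G := by
      apply two_dvd_card_of_stabilizer (B := B)
      have h1 : Nat.card φ.range ∣ Nat.card (MulAction.stabilizer G B) := Subgroup.card_range_dvd φ
      rw [hrange] at h1
      exact (Dvd.intro n rfl).trans h1
    have hP : IsDihedralPlane 𝓑 G q := by
      refine isDihedralPlane_of_induced hp hAut hflag hB hG
        (φ.range.subtype.comp e.symm.toMonoidHom) ?_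
      intro g hg hgB
      refine ⟨e ⟨φ ⟨⟨g, hg⟩, hgB⟩, ⟨_, rfl⟩⟩, fun a => ?_⟩
      change ((e.symm (e _)).1 a : P) = _
      rw [e.symm_apply_apply]
      exact hφ _ a
    obtain rfl := hP.order_eq_two
    refine ⟨by omega, by omega, ?_, hP.equiv_PSL32 hB, ?_, hP.stabilizer_equiv hB⟩
    · have h1 : Nat.card φ.range ≤ Nat.card (Equiv.Perm B) :=
        Nat.card_le_card_of_injective _ φ.range.subtype_injective
      rw [hrange, Nat.card_eq_fintype_card, Fintype.card_perm, Fintype.card_coe,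
        hp.card_line B hB] at h1
      change 2 * n ≤ 6 at h1
      omega
    · intro hfaith
      obtain ⟨c, hc, -⟩ := hp.meet B hB B hB
      obtain ⟨t, ht, hE⟩ := hP.exists_elation hB hc
      exact hE.ne_one hp hB (congrArg Subtype.val
        (hfaith ⟨t, ht⟩ (hE.line B hB hc) fun a ha => (hE.fixed_iff a).2 ha))
  · rintro ⟨e⟩
    by_contra hlam
    obtain rfl : lam = 1 := by
      have := hD.lam_pos
      omega
    obtain ⟨q, -, -, hp⟩ := hD.isPlane hsym
    have hG : 2 ∣ Nat.card G := by
      apply two_dvd_card_of_stabilizer (B := B)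
      rw [Nat.card_congr e.toEquiv, DihedralGroup.nat_card]
      exact Dvd.intro n rfl
    have hinv : ∀ g : MulAction.stabilizer G B, ∀ x, ((g : G) : Equiv.Perm P) x ∈ B ↔ x ∈ B := by
      intro g x
      have h : ((g : G) : Equiv.Perm P) • B = B := g.2
      have h1 := apply_mem_smul_iff ((g : G) : Equiv.Perm P) B x
      rwa [h] at h1
    have hP : IsDihedralPlane 𝓑 G q := by
      refine isDihedralPlane_of_induced hp hAut hflag hB hG
        ((stabilizerRestrict G B (· ∈ B) hinv).comp e.symm.toMonoidHom) ?_
      intro g hg hgB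
      refine ⟨e ⟨⟨g, hg⟩, hgB⟩, fun a => ?_⟩
      change ((e.symm (e _)).1.1 a.1 : P) = _
      rw [e.symm_apply_apply]
    obtain rfl := hP.order_eq_two
    obtain ⟨f⟩ := hP.stabilizer_equiv hB
    exact (isEmpty_dihedral_equiv_perm_four hn).false (e.symm.trans f)
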